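/- Let u = x₁ be the multiplicative inverse of q modulo p with 0 < u < p. Then D_Δ(p,u) ⊆ S_Δ(p,q); that is, for every pair (a,b) satisfying condition (4), there exist consecutive elements ℓ_j < ℓ_{j+1} of S(p,q) with ℓ_{j+1} − ℓ_j = b − a. -/

import Mathlib

/-!
The least element of `⟨p, q⟩` in the residue class of `n` modulo `p` is `w n = q * ⟨u * n⟩_p`, so
`n ∈ ⟨p, q⟩` exactly when `w n ≤ n`. Condition (4) on `(a, b)` says that `w` is larger by at least
`q` strictly between `a` and `b` than at `a` and `b`. Translate `[a, b]` by a multiple of `p` to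
the first place where both endpoints lie in the semigroup: since `b - a ≤ p < q`, the translated
interior points still miss it. If `b - a ≥ 2`, the point just below the upper end is such a gap,
so it lies below the conductor `(p - 1) * (q - 1)`, from which on every integer is an element. If
`b - a = 1`, the translate may be too large, but `q * u - 1, q * u` (when `u < p - 1`) or `q, q + 1`
(when `u = p - 1`) is a pair of adjacent elements in the required range.
-/

section Consecutive

variable {α : Type*} [Preorder α] {S : Set α} {m n : α}

/-- `m < n` are consecutive elements of the set `S`. -/
structure IsConsecutive (S : Set α) (m n : α) : Prop where
  left_mem : m ∈ S
  right_mem : n ∈ S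
  lt : m < n
  notMem_of_lt_of_lt : ∀ x, m < x → x < n → x ∉ S

theorem isConsecutive_add_one {S : Set ℤ} {m : ℤ} (hm : m ∈ S) (hm' : m + 1 ∈ S) :
    IsConsecutive S m (m + 1) :=
  ⟨hm, hm', lt_add_one m, fun _ hlt hlt' ↦ absurd (Int.lt_add_one_iff.mp hlt') hlt.not_ge⟩

theorem IsConsecutive.exists_index (h : IsConsecutive S m n) {θ : ℕ} {ℓ : ℕ → α}
    (hℓ : StrictMonoOn ℓ (Set.Iic θ)) (hS : Set.MapsTo ℓ (Set.Iic θ) S)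
    (hm : m ∈ ℓ '' Set.Iic θ) (hn : n ∈ ℓ '' Set.Iic θ) :
    ∃ j < θ, ℓ j = m ∧ ℓ (j + 1) = n := by
  obtain ⟨i, hi, rfl⟩ := hm
  obtain ⟨j, hj, rfl⟩ := hn
  have hij : i < j := (hℓ.lt_iff_lt hi hj).mp h.lt
  have hiθ : i < θ := hij.trans_le hj
  obtain hlt | rfl := (Nat.succ_le_of_lt hij).lt_or_eq
  · exact absurd (hS hiθ)
      (h.notMem_of_lt_of_lt _ (hℓ hi hiθ i.lt_succ_self) (hℓ hiθ hj hlt))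
  · exact ⟨i, hiθ, rfl, rfl⟩

end Consecutive

/-- The semigroup `⟨p, q⟩`, as a set of integers. -/
def pairSemigroup (p q : ℤ) : Set ℤ :=
  {n | ∃ a b : ℤ, 0 ≤ a ∧ 0 ≤ b ∧ n = a * q + b * p}

/-- When `u` is an inverse of `q` modulo `p`, this is the least element of `⟨p, q⟩` congruent to
`n` modulo `p`, i.e. an element of the Apéry set of `⟨p, q⟩` with respect to `p`. -/
def aperyElement (p q u n : ℤ) : ℤ :=
  q * (u * n % p)

/-- Condition (4), together with `a < b`: the residues `⟨u * n⟩_p` strictly between `a` and `b`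
exceed those at both ends. -/
structure IsLowPair (p u a b : ℤ) : Prop where
  lt : a < b
  max_emod_lt : ∀ n, a < n → n < b → max (u * a % p) (u * b % p) < u * n % p

variable {p q u m n a b : ℤ}

theorem nonneg_of_mem_pairSemigroup (hp : 0 ≤ p) (hq : 0 ≤ q) (h : n ∈ pairSemigroup p q) :
    0 ≤ n := by
  obtain ⟨x, y, hx, hy, rfl⟩ := h
  positivity

theorem mem_pairSemigroup_of_dvd (hp : 0 < p) (hn : 0 ≤ n) (h : p ∣ n) : n ∈ pairSemigroup p q := by
  obtain ⟨c, rfl⟩ := h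
  exact ⟨0, c, le_rfl, nonneg_of_mul_nonneg_right hn hp, by ring⟩

theorem aperyElement_modEq (huq : q * u ≡ 1 [ZMOD p]) : aperyElement p q u n ≡ n [ZMOD p] :=
  calc q * (u * n % p) ≡ q * (u * n) [ZMOD p] := (Int.mod_modEq _ _).mul_left q
    _ = q * u * n := (mul_assoc q u n).symm
    _ ≡ 1 * n [ZMOD p] := huq.mul_right n
    _ = n := one_mul n

theorem aperyElement_congr (h : m ≡ n [ZMOD p]) :
    aperyElement p q u m = aperyElement p q u n :=
  congrArg (q * ·) (h.mul_left u)

theorem mem_pairSemigroup_of_aperyElement_sub_lt (hp : 0 < p) (huq : q * u ≡ 1 [ZMOD p])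
    (h : aperyElement p q u n - p < n) : n ∈ pairSemigroup p q := by
  obtain ⟨c, hc⟩ := (aperyElement_modEq (n := n) huq).dvd
  have hc_gt : -1 < c := lt_of_mul_lt_mul_left (by linarith : p * -1 < p * c) hp.le
  exact ⟨u * n % p, c, Int.emod_nonneg _ hp.ne', by lia, by rw [aperyElement] at hc; linarith⟩

theorem aperyElement_le_of_mem_pairSemigroup (hp : 0 ≤ p) (hq : 0 ≤ q)
    (huq : q * u ≡ 1 [ZMOD p]) (h : n ∈ pairSemigroup p q) : aperyElement p q u n ≤ n := by
  obtain ⟨x, y, hx, hy, rfl⟩ := h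
  have hres : u * (x * q + y * p) ≡ x [ZMOD p] :=
    calc u * (x * q + y * p) = x * (q * u) + p * (u * y) := by ring
      _ ≡ x * (q * u) [ZMOD p] := Int.modEq_add_fac_self
      _ ≡ x * 1 [ZMOD p] := huq.mul_left x
      _ = x := mul_one x
  have hmod : x % p ≤ x := by
    rw [Int.emod_def]
    exact sub_le_self x (mul_nonneg hp (Int.ediv_nonneg hx hp))
  calc q * (u * (x * q + y * p) % p) = q * (x % p) := by rw [hres.eq]
    _ ≤ q * x := mul_le_mul_of_nonneg_left hmod hq
    _ ≤ x * q + y * p := by linarith [mul_nonneg hy hp]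

theorem mem_pairSemigroup_iff (hp : 0 < p) (hq : 0 ≤ q) (huq : q * u ≡ 1 [ZMOD p]) :
    n ∈ pairSemigroup p q ↔ aperyElement p q u n ≤ n :=
  ⟨aperyElement_le_of_mem_pairSemigroup hp.le hq huq,
    fun h ↦ mem_pairSemigroup_of_aperyElement_sub_lt hp huq (by linarith)⟩

theorem mem_pairSemigroup_of_conductor_le (hp : 0 < p) (hq : 0 ≤ q)
    (huq : q * u ≡ 1 [ZMOD p]) (hn : (p - 1) * (q - 1) ≤ n) : n ∈ pairSemigroup p q := by
  have hle : aperyElement p q u n ≤ q * (p - 1) :=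
    mul_le_mul_of_nonneg_left (Int.le_sub_one_of_lt (Int.emod_lt_of_pos _ hp)) hq
  exact mem_pairSemigroup_of_aperyElement_sub_lt hp huq (by linarith)

theorem IsConsecutive.le_conductor (h : IsConsecutive (pairSemigroup p q) m n)
    (hmn : m + 1 < n) (hp : 0 < p) (hq : 0 ≤ q) (huq : q * u ≡ 1 [ZMOD p]) :
    n ≤ (p - 1) * (q - 1) := by
  by_contra! hlt
  exact h.notMem_of_lt_of_lt (n - 1) (by lia) (by lia)
    (mem_pairSemigroup_of_conductor_le hp hq huq (by lia))

theorem exists_adjacent_mem_pairSemigroup (hp : 3 ≤ p) (hpq : p ≤ q) (hu0 : 0 < u) (hup : u < p)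
    (huq : q * u ≡ 1 [ZMOD p]) :
    ∃ m, m ∈ pairSemigroup p q ∧ m + 1 ∈ pairSemigroup p q ∧ m + 1 ≤ (p - 1) * (q - 1) := by
  have hp0 : 0 < p := by linarith
  have hq0 : 0 < q := by linarith
  obtain hu | rfl := (Int.le_sub_one_of_lt hup).lt_or_eq
  · have hle : q * u ≤ q * (p - 2) := mul_le_mul_of_nonneg_left (by lia) hq0.le
    exact ⟨q * u - 1, mem_pairSemigroup_of_dvd hp0 (by linarith [Int.mul_pos hq0 hu0])
      huq.symm.dvd, ⟨u, 0, hu0.le, le_rfl, by ring⟩, by linarith⟩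
  · have hle : 2 * (q - 1) ≤ (p - 1) * (q - 1) :=
      mul_le_mul_of_nonneg_right (by linarith) (by linarith)
    have hdvd : p ∣ q + 1 := by
      obtain ⟨c, hc⟩ := huq.dvd
      exact ⟨c + q, by linear_combination hc⟩
    exact ⟨q, ⟨1, 0, zero_le_one, le_rfl, by ring⟩,
      mem_pairSemigroup_of_dvd hp0 (by linarith) hdvd, by linarith⟩

namespace IsLowPair

theorem sub_le (h : IsLowPair p u a b) (hp : 0 < p) : b - a ≤ p := by
  by_contra! hlt
  have hres : u * (a + p) % p = u * a % p := by rw [mul_add, Int.add_mul_emod_self_right]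
  have hmax := h.max_emod_lt (a + p) (by linarith) (by linarith)
  exact (le_max_left _ _).not_gt (hres ▸ hmax)

theorem max_aperyElement_add_le (h : IsLowPair p u a b) (hq : 0 ≤ q) (han : a < n) (hnb : n < b) :
    max (aperyElement p q u a) (aperyElement p q u b) + q ≤ aperyElement p q u n :=
  calc max (q * (u * a % p)) (q * (u * b % p)) + q
      = q * (max (u * a % p) (u * b % p) + 1) := by rw [← mul_max_of_nonneg _ _ hq, mul_add_one]
    _ ≤ q * (u * n % p) := mul_le_mul_of_nonneg_left (h.max_emod_lt n han hnb) hq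

theorem exists_isConsecutive (h : IsLowPair p u a b) (hp : 0 < p) (hpq : p ≤ q)
    (huq : q * u ≡ 1 [ZMOD p]) :
    ∃ m, IsConsecutive (pairSemigroup p q) m (m + (b - a)) := by
  have hq : 0 ≤ q := hp.le.trans hpq
  -- The least `m ≡ a` for which both `m` and `m + (b - a)` lie in the semigroup.
  let m := max (aperyElement p q u a) (aperyElement p q u b - (b - a))
  have hma : m ≡ a [ZMOD p] := by
    obtain hm | hm : m = _ ∨ m = _ := max_choice _ _
    · exact hm ▸ aperyElement_modEq huq
    · simpa only [hm, sub_sub_cancel] using (aperyElement_modEq (n := b) huq).sub_right (b - a)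
  have hmem (k : ℤ) : m + k ∈ pairSemigroup p q ↔ aperyElement p q u (a + k) ≤ m + k := by
    rw [mem_pairSemigroup_iff hp hq huq, aperyElement_congr (hma.add_right k)]
  have hleft : aperyElement p q u a ≤ m := le_max_left _ _
  have hright : aperyElement p q u b - (b - a) ≤ m := le_max_right _ _
  refine ⟨m, by simpa using (hmem 0).mpr (by simpa using hleft), (hmem _).mpr ?_,
    by linarith [h.lt], fun x hmx hxm hx ↦ ?_⟩
  · rw [add_sub_cancel]
    linarith
  · obtain ⟨k, rfl⟩ : ∃ k, x = m + k := ⟨x - m, by ring⟩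
    have hgap := h.max_aperyElement_add_le (n := a + k) hq (by linarith) (by linarith)
    obtain ⟨hgap_left, hgap_right⟩ := max_le_iff.mp (le_sub_right_of_add_le hgap)
    have hm_lt : m < aperyElement p q u (a + k) - k :=
      max_lt (by linarith [h.sub_le hp]) (by linarith)
    linarith [(hmem k).mp hx]

theorem exists_isConsecutive_le_conductor (h : IsLowPair p u a b) (hp : 3 ≤ p) (hpq : p ≤ q)
    (hu0 : 0 < u) (hup : u < p) (huq : q * u ≡ 1 [ZMOD p]) :
    ∃ m, IsConsecutive (pairSemigroup p q) m (m + (b - a)) ∧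
      m + (b - a) ≤ (p - 1) * (q - 1) := by
  have hp0 : 0 < p := by linarith
  obtain hab | hab := (Int.add_one_le_of_lt h.lt).eq_or_lt
  · obtain ⟨m, hm, hm', hle⟩ := exists_adjacent_mem_pairSemigroup hp hpq hu0 hup huq
    rw [← hab, add_sub_cancel_left]
    exact ⟨m, isConsecutive_add_one hm hm', hle⟩
  · obtain ⟨m, hm⟩ := h.exists_isConsecutive hp0 hpq huq
    exact ⟨m, hm, hm.le_conductor (by linarith) hp0 (hp0.le.trans hpq) huq⟩

end IsLowPair

/-- Lemma 15: with `u = x₁` the inverse of `q` mod `p`, `D_Δ(p,u) ⊆ S_Δ(p,q)`: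
for every pair `(a,b)` satisfying condition (4) there are consecutive elements
`ℓ_j < ℓ_{j+1}` of `S(p,q)` with `ℓ_{j+1} - ℓ_j = b - a`. -/
theorem stmt_17 (p q : ℤ) (hp : 3 ≤ p) (hpq : p < q) (hcop : IsCoprime p q)
    (θ : ℕ) (hθ : (θ : ℤ) * 2 = (p - 1) * (q - 1))
    (ℓ : ℕ → ℤ)
    (hℓmem : ∀ j : ℕ, j ≤ θ →
      (∃ a b : ℤ, 0 ≤ a ∧ 0 ≤ b ∧ ℓ j = a * q + b * p) ∧
      0 ≤ ℓ j ∧ ℓ j ≤ (p - 1) * (q - 1))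
    (hℓsurj : ∀ m : ℤ, (∃ a b : ℤ, 0 ≤ a ∧ 0 ≤ b ∧ m = a * q + b * p) →
      0 ≤ m → m ≤ (p - 1) * (q - 1) → ∃ j : ℕ, j ≤ θ ∧ ℓ j = m)
    (hℓmono : ∀ i j : ℕ, i < j → j ≤ θ → ℓ i < ℓ j)
    (u : ℤ) (hu0 : 0 < u) (hup : u < p) (huq : (q * u) % p = 1) :
    ∀ a b : ℤ, a < b →
      (∀ n : ℤ, a < n → n < b → max ((u * a) % p) ((u * b) % p) < (u * n) % p) →
      ∃ j : ℕ, j < θ ∧ ℓ (j + 1) - ℓ j = b - a := by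
  intro a b hab hlow
  have huq' : q * u ≡ 1 [ZMOD p] := huq.trans (Int.emod_eq_of_lt zero_le_one (by linarith)).symm
  obtain ⟨m, hm, hle⟩ :=
    IsLowPair.exists_isConsecutive_le_conductor ⟨hab, hlow⟩ hp hpq.le hu0 hup huq'
  have hm0 : 0 ≤ m := nonneg_of_mem_pairSemigroup (by linarith) (by linarith) hm.left_mem
  obtain ⟨j, hj, hjm, hjm'⟩ := hm.exists_index (θ := θ) (ℓ := ℓ)
    (fun i _ j hj hij ↦ hℓmono i j hij hj) (fun j hj ↦ (hℓmem j hj).1)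
    (hℓsurj m hm.left_mem hm0 (hm.lt.le.trans hle))
    (hℓsurj _ hm.right_mem (hm0.trans hm.lt.le) hle)
  exact ⟨j, hj, by rw [hjm, hjm', add_sub_cancel_left]⟩
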